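/- If B_1, B_2 are commuting 2×2 complex matrices which are not simultaneously diagonalizable and B_1 is cyclic (has a cyclic vector), then the pair (B_1, B_2) is not hypercyclic on ℂ². -/

import Mathlib

/-!
Commuting `2 × 2` complex matrices that are not simultaneously diagonalizable have the form
`a + bN` and `m + qN` with `N ≠ 0` and `N² = 0`. For a linear form `g` with `f = g ∘ N ≠ 0`, both
matrices scale `f` and act on the ratio `g / f` as translations, by `b / a` and `q / m`. Hence the
ratio of every point of an orbit with `f ≠ 0` lies in a coset of the subgroup generated by `b / a`
and `q / m`, and a subgroup with two generators is not dense in the real plane `ℂ`.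
-/

open Module

section Density

variable {E : Type*} [AddCommGroup E] [Module ℝ E] [TopologicalSpace E] [IsTopologicalAddGroup E]
  [ContinuousSMul ℝ E] [T2Space E]

lemma not_dense_addSubgroup_closure_pair (hE : 1 < finrank ℝ E) (u w : E) :
    ¬ Dense (AddSubgroup.closure {u, w} : Set E) := by
  intro hdense
  have : FiniteDimensional ℝ E := .of_finrank_pos (zero_lt_one.trans hE)
  have hspan : Submodule.span ℝ {w} < ⊤ :=
    Submodule.lt_top_of_finrank_lt_finrank ((finrank_span_le_card {w}).trans_lt (by simpa using hE))
  obtain ⟨φ, hφ, hker⟩ := Submodule.exists_le_ker_of_lt_top _ hspan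
  have hφw : φ w = 0 := hker (Submodule.mem_span_singleton_self w)
  have hle : AddSubgroup.closure {u, w} ≤
      (AddSubgroup.zmultiples (φ u)).comap φ.toAddMonoidHom := by
    rw [AddSubgroup.closure_le, Set.pair_subset_iff]
    exact ⟨AddSubgroup.mem_zmultiples (φ u), by simp [hφw]⟩
  have himage : Dense (φ '' (AddSubgroup.closure {u, w} : Set E)) :=
    (LinearMap.surjective hφ).denseRange.dense_image φ.continuous_of_finiteDimensional hdense
  exact not_denseRange_zsmul (himage.mono (Set.image_subset_iff.2 hle))

lemma dense_image_inter_of_surjOn {X Y : Type*} [TopologicalSpace X] [TopologicalSpace Y]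
    {S U : Set X} {h : X → Y} (hS : Dense S) (hU : IsOpen U) (hcont : ContinuousOn h U)
    (hsurj : Set.SurjOn h U Set.univ) : Dense (h '' (U ∩ S)) := by
  intro y
  obtain ⟨x, hxU, rfl⟩ := hsurj (Set.mem_univ y)
  exact ((hcont x hxU).mono Set.inter_subset_left).mem_closure_image
    (hS.open_subset_closure_inter hU hxU)

end Density

section Triangular

-- The formula also covers `a = 0`: then `f (A^[k] y) ≠ 0` forces `k = 0`, while `b / a = 0`.
lemma div_iterate_eq_add_mul {X K : Type*} [Field K] {A : X → X} {f g : X → K} {a b : K}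
    (hf : ∀ y, f (A y) = a * f y) (hg : ∀ y, g (A y) = a * g y + b * f y) (k : ℕ) (y : X)
    (hy : f (A^[k] y) ≠ 0) :
    f y ≠ 0 ∧ g (A^[k] y) / f (A^[k] y) = g y / f y + k * (b / a) := by
  induction k with
  | zero => simpa using hy
  | succ k ih =>
    rw [Function.iterate_succ_apply', hf] at hy ⊢
    obtain ⟨ha, hk⟩ := mul_ne_zero_iff.1 hy
    obtain ⟨hy, hslope⟩ := ih hk
    refine ⟨hy, ?_⟩
    calc g (A (A^[k] y)) / (a * f (A^[k] y))
        = g (A^[k] y) / f (A^[k] y) + b / a := by rw [hg]; field_simp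
      _ = g y / f y + (k + 1 : ℕ) * (b / a) := by rw [hslope]; push_cast; ring

theorem not_dense_orbit_of_triangular {X : Type*} [TopologicalSpace X] {A B : X → X}
    {f g : X → ℂ} {a b m q : ℂ} (hf : Continuous f) (hg : Continuous g)
    (hfg : Function.Surjective fun y ↦ (f y, g y))
    (hfA : ∀ y, f (A y) = a * f y) (hgA : ∀ y, g (A y) = a * g y + b * f y)
    (hfB : ∀ y, f (B y) = m * f y) (hgB : ∀ y, g (B y) = m * g y + q * f y) (x : X) :
    ¬ Dense {y | ∃ k l : ℕ, y = A^[k] (B^[l] x)} := by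
  intro hdense
  let h : X → ℂ := fun y ↦ g y / f y - g x / f x
  have hopen : IsOpen {y | f y ≠ 0} := isOpen_ne_fun hf continuous_const
  have hcont : ContinuousOn h {y | f y ≠ 0} :=
    (hg.continuousOn.div hf.continuousOn fun _ hy ↦ hy).sub continuousOn_const
  have hsurj : Set.SurjOn h {y | f y ≠ 0} Set.univ := by
    intro z _
    obtain ⟨y, hy⟩ := hfg (1, z + g x / f x)
    obtain ⟨hfy, hgy⟩ := Prod.mk.inj hy
    exact ⟨y, by simp [hfy], by simp [h, hfy, hgy]⟩
  refine not_dense_addSubgroup_closure_pair (by simp) (b / a) (q / m)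
    ((dense_image_inter_of_surjOn hdense hopen hcont hsurj).mono ?_)
  rintro _ ⟨_, ⟨hne, k, l, rfl⟩, rfl⟩
  obtain ⟨hB, hslopeA⟩ := div_iterate_eq_add_mul hfA hgA k (B^[l] x) hne
  obtain ⟨-, hslopeB⟩ := div_iterate_eq_add_mul hfB hgB l x hB
  refine AddSubgroup.mem_closure_pair.2 ⟨k, l, ?_⟩
  simp only [h, hslopeA, hslopeB, zsmul_eq_mul, Int.cast_natCast]
  ring

end Triangular

section SquareZero

lemma surjective_prodMk_of_sq_zero {K V : Type*} [Field K] [AddCommGroup V] [Module K V]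
    {N : End K V} (hN : N * N = 0) {g : Dual K V} (hg : g ∘ₗ N ≠ 0) :
    Function.Surjective fun y ↦ (g (N y), g y) := by
  obtain ⟨v, hv⟩ := DFunLike.ne_iff.1 hg
  have hv : g (N v) ≠ 0 := hv
  have hNN : N (N v) = 0 := LinearMap.congr_fun hN v
  rintro ⟨s, t⟩
  refine ⟨(s / g (N v)) • v + ((t - s / g (N v) * g v) / g (N v)) • N v, ?_⟩
  ext <;> simp [hNN, hv]

variable {V : Type*} [AddCommGroup V] [Module ℂ V] [TopologicalSpace V]
  [IsTopologicalAddGroup V] [ContinuousSMul ℂ V] [T2Space V] [FiniteDimensional ℂ V]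

theorem not_dense_orbit_of_sq_zero {N : End ℂ V} (hN : N * N = 0) (hN0 : N ≠ 0) (a b m q : ℂ)
    (x : V) : ¬ Dense {y | ∃ k l : ℕ, y = ((a • 1 + b • N) ^ k * (m • 1 + q • N) ^ l) x} := by
  obtain ⟨v, hv⟩ := DFunLike.ne_iff.1 hN0
  obtain ⟨g, hgv⟩ : ∃ g : Dual ℂ V, g (N v) ≠ 0 := by
    contrapose! hv
    exact (forall_dual_apply_eq_zero_iff ℂ (N v)).1 hv
  have hNN (y : V) : N (N y) = 0 := LinearMap.congr_fun hN y
  have hscale (c d : ℂ) (y : V) : (g ∘ₗ N) ((c • 1 + d • N) y) = c * (g ∘ₗ N) y := by simp [hNN]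
  have hshear (c d : ℂ) (y : V) : g ((c • 1 + d • N) y) = c * g y + d * (g ∘ₗ N) y := by simp
  simp only [Module.End.mul_apply, Module.End.pow_apply]
  exact not_dense_orbit_of_triangular (g ∘ₗ N).continuous_of_finiteDimensional
    g.continuous_of_finiteDimensional
    (surjective_prodMk_of_sq_zero hN (DFunLike.ne_iff.2 ⟨v, hgv⟩))
    (hscale a b) (hshear a b) (hscale m q) (hshear m q) x

end SquareZero

section NormalForm

variable {K n : Type*} [Field K] [Fintype n] [DecidableEq n]

/-- Diagonalizability over the base field: some invertible `P` makes `P⁻¹ * A * P` diagonal. -/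
def IsDiagonalizable (A : Matrix n n K) : Prop :=
  ∃ P : Matrix n n K, IsUnit P ∧ (P⁻¹ * A * P).IsDiag

lemma isDiagonalizable_smul_one (c : K) : IsDiagonalizable (c • 1 : Matrix n n K) :=
  ⟨1, isUnit_one, by simp⟩

lemma isDiagonalizable_of_injective_of_mem_spectrum {A : Matrix n n K} {μ : n → K}
    (hμ : Function.Injective μ) (hspec : ∀ i, μ i ∈ spectrum K A) : IsDiagonalizable A := by
  have heigen (i : n) : ∃ v, End.HasEigenvector (Matrix.toLin' A) (μ i) v :=
    (End.hasEigenvalue_iff_mem_spectrum.2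
      (Matrix.spectrum_toLin' (R := K) A ▸ hspec i)).exists_hasEigenvector
  choose v hv using heigen
  let P : Matrix n n K := (Matrix.of v).transpose
  have hP : IsUnit P := Matrix.linearIndependent_cols_iff_isUnit.1
    (End.eigenvectors_linearIndependent' (Matrix.toLin' A) μ hμ v hv)
  have hAP : A * P = P * Matrix.diagonal μ := by
    ext i j
    rw [Matrix.mul_diagonal]
    simpa [P, Matrix.mul_apply, Matrix.mulVec, dotProduct, mul_comm] using
      congrFun (hv j).apply_eq_smul i
  refine ⟨P, hP, ?_⟩
  have hdet : IsUnit P.det := (Matrix.isUnit_iff_isUnit_det P).1 hP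
  rw [mul_assoc, hAP, Matrix.nonsing_inv_mul_cancel_left P _ hdet]
  exact Matrix.isDiag_diagonal μ

lemma sub_smul_one_pow_card_eq_zero_of_spectrum_subset [IsAlgClosed K] {A : Matrix n n K} {a : K}
    (hspec : spectrum K A ⊆ {a}) : (A - a • 1) ^ Fintype.card n = 0 := by
  have hsplits : A.charpoly.Splits := IsAlgClosed.splits _
  have hroots : A.charpoly.roots = Multiset.replicate (Fintype.card n) a := by
    refine Multiset.eq_replicate.2 ⟨?_, fun b hb ↦ ?_⟩
    · rw [← hsplits.natDegree_eq_card_roots, A.charpoly_natDegree_eq_dim]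
    · exact hspec (Matrix.mem_spectrum_iff_isRoot_charpoly.2 (Polynomial.isRoot_of_mem_roots hb))
  have hcharpoly := hsplits.eq_prod_roots_of_monic A.charpoly_monic
  rw [hroots, Multiset.map_replicate, Multiset.prod_replicate] at hcharpoly
  simpa [hcharpoly, Algebra.algebraMap_eq_smul_one] using A.aeval_self_charpoly

lemma exists_sq_zero_of_not_isDiagonalizable [IsAlgClosed K] {A : Matrix (Fin 2) (Fin 2) K}
    (hA : ¬ IsDiagonalizable A) :
    ∃ (a : K) (N : Matrix (Fin 2) (Fin 2) K), N * N = 0 ∧ A = a • 1 + N := by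
  have hsub : (spectrum K A).Subsingleton := by
    intro a ha b hb
    by_contra hab
    refine hA (isDiagonalizable_of_injective_of_mem_spectrum (μ := ![a, b]) ?_ ?_)
    · simpa [Function.Injective, Fin.forall_fin_two, eq_comm] using hab
    · simp [Fin.forall_fin_two, ha, hb]
  obtain ⟨a, ha⟩ := spectrum.nonempty_of_isAlgClosed_of_finiteDimensional K A
  refine ⟨a, A - a • 1, ?_, by abel⟩
  simpa [sq] using sub_smul_one_pow_card_eq_zero_of_spectrum_subset
    fun b hb ↦ hsub hb ha

lemma exists_eq_smul_one_add_smul_of_commute {V : Type*} [AddCommGroup V] [Module K V]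
    (hV : finrank K V = 2) {A B : End K V} (hAB : Commute A B) (hA : ∀ c : K, A ≠ c • 1) :
    ∃ α β : K, B = α • 1 + β • A := by
  obtain ⟨v, hv⟩ : ∃ v, LinearIndependent K ![v, A v] := by
    contrapose! hA
    exact LinearMap.exists_eq_smul_id_of_forall_notLinearIndependent hA
  let e := basisOfLinearIndependentOfCardEqFinrank hv (by simp [hV])
  have he0 : e 0 = v := by simp [e]
  have he1 : e 1 = A v := by simp [e]
  have hBv : B v = e.repr (B v) 0 • v + e.repr (B v) 1 • A v := by
    rw [← he1, ← he0, ← Fin.sum_univ_two fun i ↦ e.repr (B (e 0)) i • e i, e.sum_repr]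
  have hBA : B (A v) = A (B v) := (LinearMap.congr_fun hAB v).symm
  refine ⟨e.repr (B v) 0, e.repr (B v) 1, e.ext (Fin.forall_fin_two.2 ⟨?_, ?_⟩)⟩
  · simpa [he0] using hBv
  · rw [he1, hBA]
    nth_rw 1 [hBv]
    simp

lemma exists_eq_smul_one_add_smul_of_commute_fin_two {A B : Matrix (Fin 2) (Fin 2) K}
    (hAB : Commute A B) (hA : ∀ c : K, A ≠ c • 1) : ∃ α β : K, B = α • 1 + β • A := by
  let e := Matrix.toLinAlgEquiv' (R := K) (n := Fin 2)
  obtain ⟨α, β, hB⟩ := exists_eq_smul_one_add_smul_of_commute (by simp) (hAB.map e)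
    fun c hc ↦ hA c (e.injective (by simpa using hc))
  exact ⟨α, β, e.injective (by simpa using hB)⟩

lemma isDiag_conj_smul_one_add_smul {A P : Matrix n n K} (hP : IsUnit P)
    (hA : (P⁻¹ * A * P).IsDiag) (α β : K) : (P⁻¹ * (α • 1 + β • A) * P).IsDiag := by
  have hconj : P⁻¹ * (α • 1 + β • A) * P = α • 1 + β • (P⁻¹ * A * P) := by
    simp [mul_add, add_mul, Matrix.nonsing_inv_mul P ((Matrix.isUnit_iff_isUnit_det P).1 hP)]
  rw [hconj]
  exact (Matrix.isDiag_one.smul α).add (hA.smul β)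

lemma exists_isDiag_conj_of_commute {A B : Matrix (Fin 2) (Fin 2) K} (hAB : Commute A B)
    (hA : IsDiagonalizable A) (hB : IsDiagonalizable B) :
    ∃ P : Matrix (Fin 2) (Fin 2) K, IsUnit P ∧ (P⁻¹ * A * P).IsDiag ∧ (P⁻¹ * B * P).IsDiag := by
  by_cases hscalar : ∃ c : K, A = c • 1
  · obtain ⟨c, rfl⟩ := hscalar
    obtain ⟨P, hP, hPB⟩ := hB
    exact ⟨P, hP, by simpa using isDiag_conj_smul_one_add_smul hP hPB c 0, hPB⟩
  · obtain ⟨α, β, rfl⟩ :=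
      exists_eq_smul_one_add_smul_of_commute_fin_two hAB (not_exists.1 hscalar)
    obtain ⟨P, hP, hPA⟩ := hA
    exact ⟨P, hP, hPA, isDiag_conj_smul_one_add_smul hP hPA α β⟩

lemma exists_sq_zero_of_commute_of_not_isDiagonalizable [IsAlgClosed K]
    {A B : Matrix (Fin 2) (Fin 2) K} (hAB : Commute A B) (hA : ¬ IsDiagonalizable A) :
    ∃ N : Matrix (Fin 2) (Fin 2) K, N * N = 0 ∧ N ≠ 0 ∧
      ∃ a b m q : K, A = a • 1 + b • N ∧ B = m • 1 + q • N := by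
  obtain ⟨α, β, rfl⟩ := exists_eq_smul_one_add_smul_of_commute_fin_two hAB
    fun c hc ↦ hA (hc ▸ isDiagonalizable_smul_one c)
  obtain ⟨a, N, hN, rfl⟩ := exists_sq_zero_of_not_isDiagonalizable hA
  refine ⟨N, hN, ?_, a, 1, α + β * a, β, by simp, by module⟩
  rintro rfl
  exact hA (by simpa using isDiagonalizable_smul_one a)

lemma exists_sq_zero_of_commute [IsAlgClosed K] {A B : Matrix (Fin 2) (Fin 2) K}
    (hAB : Commute A B)
    (hnotdiag : ¬ ∃ P : Matrix (Fin 2) (Fin 2) K, IsUnit P ∧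
      (P⁻¹ * A * P).IsDiag ∧ (P⁻¹ * B * P).IsDiag) :
    ∃ N : Matrix (Fin 2) (Fin 2) K, N * N = 0 ∧ N ≠ 0 ∧
      ∃ a b m q : K, A = a • 1 + b • N ∧ B = m • 1 + q • N := by
  by_cases hA : IsDiagonalizable A
  · have hB : ¬ IsDiagonalizable B := fun hB ↦ hnotdiag (exists_isDiag_conj_of_commute hAB hA hB)
    obtain ⟨N, hN, hN0, a, b, m, q, hBN, hAN⟩ :=
      exists_sq_zero_of_commute_of_not_isDiagonalizable hAB.symm hB
    exact ⟨N, hN, hN0, m, q, a, b, hAN, hBN⟩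
  · exact exists_sq_zero_of_commute_of_not_isDiagonalizable hAB hA

end NormalForm

theorem commuting_cyclic_pair_not_hypercyclic_general
    (B1 B2 : Matrix (Fin 2) (Fin 2) ℂ)
    (hcomm : B1 * B2 = B2 * B1)
    (hnotdiag : ¬ ∃ P : Matrix (Fin 2) (Fin 2) ℂ, IsUnit P ∧
      (P⁻¹ * B1 * P).IsDiag ∧ (P⁻¹ * B2 * P).IsDiag)
    (x : Fin 2 → ℂ) :
    ¬ Dense {y : Fin 2 → ℂ | ∃ k1 k2 : ℕ, y = (B1 ^ k1 * B2 ^ k2).mulVec x} := by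
  obtain ⟨N, hN, hN0, a, b, m, q, rfl, rfl⟩ := exists_sq_zero_of_commute hcomm hnotdiag
  let e := Matrix.toLinAlgEquiv' (R := ℂ) (n := Fin 2)
  have hnotdense := not_dense_orbit_of_sq_zero (N := e N) (by rw [← map_mul, hN, map_zero])
    (by simpa using hN0) a b m q x
  have hpow (k l : ℕ) : (a • 1 + b • e N) ^ k * (m • 1 + q • e N) ^ l =
      e ((a • 1 + b • N) ^ k * (m • 1 + q • N) ^ l) := by
    simp only [map_mul, map_pow, map_add, map_smul, map_one]
  simpa only [hpow, e, Matrix.toLinAlgEquiv'_apply] using hnotdense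

theorem commuting_cyclic_pair_not_hypercyclic
    (B1 B2 : Matrix (Fin 2) (Fin 2) ℂ)
    (hcomm : B1 * B2 = B2 * B1)
    (hnotdiag : ¬ ∃ P : Matrix (Fin 2) (Fin 2) ℂ, IsUnit P ∧
      (P⁻¹ * B1 * P).IsDiag ∧ (P⁻¹ * B2 * P).IsDiag)
    (hcyclic : ∃ v : Fin 2 → ℂ,
      Submodule.span ℂ {x : Fin 2 → ℂ | ∃ m : ℕ, x = (B1 ^ m).mulVec v} = ⊤) :
    ∀ x : Fin 2 → ℂ,
      ¬ Dense {y : Fin 2 → ℂ | ∃ k1 k2 : ℕ, y = (B1 ^ k1 * B2 ^ k2).mulVec x} := by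
  exact commuting_cyclic_pair_not_hypercyclic_general B1 B2 hcomm hnotdiag
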